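/- arXiv:0710.5154 — 2 statements merged into one kernel-verified Lean document; each statement's English description precedes it below -/
import Mathlib

section
/- The function h is strictly decreasing on (0,1): for all α, β ∈ (0,1) with α < β one has h(α) > h(β). -/
open MeasureTheory Real

/-- The standard normal cumulative distribution function Φ. -/
noncomputable def stdNormalCDF (x : ℝ) : ℝ :=
  ∫ t in Set.Iic x, Real.exp (-t ^ 2 / 2) / Real.sqrt (2 * Real.pi)

/-- The standard normal density φ. -/
noncomputable def stdNormalPDF (x : ℝ) : ℝ :=
  Real.exp (-x ^ 2 / 2) / Real.sqrt (2 * Real.pi)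

/-- The standard normal quantile function Φ⁻¹. -/
noncomputable def stdNormalQuantile (u : ℝ) : ℝ :=
  sInf {x : ℝ | u ≤ stdNormalCDF x}

/-- h(α) := φ(Φ⁻¹(1-α)) / (α √(2π)). -/
noncomputable def hFun (a : ℝ) : ℝ :=
  stdNormalPDF (stdNormalQuantile (1 - a)) / (a * Real.sqrt (2 * Real.pi))

lemma stdNormalPDF_pos (x : ℝ) : 0 < stdNormalPDF x := by
  unfold stdNormalPDF
  positivity

lemma continuous_stdNormalPDF : Continuous stdNormalPDF := by
  unfold stdNormalPDF
  fun_prop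

lemma stdNormalPDF_eq_gaussianPDFReal :
    stdNormalPDF = ProbabilityTheory.gaussianPDFReal 0 1 := by
  ext x
  simp [stdNormalPDF, ProbabilityTheory.gaussianPDFReal, div_eq_inv_mul]

lemma integrable_stdNormalPDF : Integrable stdNormalPDF := by
  rw [stdNormalPDF_eq_gaussianPDFReal]
  exact ProbabilityTheory.integrable_gaussianPDFReal 0 1

lemma integral_stdNormalPDF : ∫ x, stdNormalPDF x = 1 := by
  rw [stdNormalPDF_eq_gaussianPDFReal]
  exact ProbabilityTheory.integral_gaussianPDFReal_eq_one 0 one_ne_zero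

lemma stdNormalCDF_eq_setIntegral (x : ℝ) :
    stdNormalCDF x = ∫ t in Set.Iic x, stdNormalPDF t := rfl

lemma stdNormalCDF_eq_cdf_gaussianReal (x : ℝ) :
    stdNormalCDF x = ProbabilityTheory.cdf (ProbabilityTheory.gaussianReal 0 1) x := by
  rw [ProbabilityTheory.cdf_eq_real, measureReal_def,
    ProbabilityTheory.gaussianReal_apply_eq_integral 0 one_ne_zero,
    ← stdNormalPDF_eq_gaussianPDFReal, ← stdNormalCDF_eq_setIntegral, ENNReal.toReal_ofReal]
  exact integral_nonneg fun t => (stdNormalPDF_pos t).le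

lemma stdNormalCDF_sub (x y : ℝ) :
    stdNormalCDF y - stdNormalCDF x = ∫ t in x..y, stdNormalPDF t :=
  intervalIntegral.integral_Iic_sub_Iic integrable_stdNormalPDF.integrableOn
    integrable_stdNormalPDF.integrableOn

lemma strictMono_stdNormalCDF : StrictMono stdNormalCDF := by
  intro x y hxy
  rw [← sub_pos, stdNormalCDF_sub]
  exact intervalIntegral.intervalIntegral_pos_of_pos
    integrable_stdNormalPDF.intervalIntegrable stdNormalPDF_pos hxy

lemma continuous_stdNormalCDF : Continuous stdNormalCDF := by
  have h : stdNormalCDF = fun x => stdNormalCDF 0 + ∫ t in (0 : ℝ)..x, stdNormalPDF t := by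
    ext x
    rw [← stdNormalCDF_sub]
    ring
  rw [h]
  exact continuous_const.add (intervalIntegral.continuous_primitive
    (fun _ _ => integrable_stdNormalPDF.intervalIntegrable) 0)

lemma exists_stdNormalCDF_eq {u : ℝ} (hu : u ∈ Set.Ioo (0 : ℝ) 1) : ∃ x, stdNormalCDF x = u := by
  have hcdf : stdNormalCDF = ProbabilityTheory.cdf (ProbabilityTheory.gaussianReal 0 1) :=
    funext stdNormalCDF_eq_cdf_gaussianReal
  refine mem_range_of_exists_le_of_exists_ge continuous_stdNormalCDF ?_ ?_ <;> rw [hcdf]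
  · exact ((ProbabilityTheory.tendsto_cdf_atBot _).eventually_le_const hu.1).exists
  · exact ((ProbabilityTheory.tendsto_cdf_atTop _).eventually_const_le hu.2).exists

lemma stdNormalQuantile_stdNormalCDF (x : ℝ) : stdNormalQuantile (stdNormalCDF x) = x := by
  simp only [stdNormalQuantile, strictMono_stdNormalCDF.le_iff_le]
  exact csInf_Ici

lemma one_sub_stdNormalCDF (x : ℝ) :
    1 - stdNormalCDF x = ∫ s in Set.Ioi (0 : ℝ), stdNormalPDF (s + x) := by
  have h := (measurePreserving_add_right volume x).setIntegral_preimage_emb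
    (measurableEmbedding_addRight x) stdNormalPDF (Set.Ioi x)
  rw [Set.preimage_add_const_Ioi, sub_self] at h
  rw [h, ← integral_stdNormalPDF, stdNormalCDF_eq_setIntegral, ← Set.compl_Iic,
    setIntegral_compl measurableSet_Iic integrable_stdNormalPDF]

/-- The hazard rate `φ / (1 - Φ)` is strictly increasing, in cross-multiplied form. -/
lemma stdNormalPDF_mul_one_sub_stdNormalCDF_lt {x y : ℝ} (hxy : x < y) :
    stdNormalPDF x * (1 - stdNormalCDF y) < stdNormalPDF y * (1 - stdNormalCDF x) := by
  have hlt : ∀ s ∈ Set.Ioi (0 : ℝ),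
      0 < stdNormalPDF y * stdNormalPDF (s + x) - stdNormalPDF x * stdNormalPDF (s + y) := by
    intro s hs
    have hexp : rexp (-x ^ 2 / 2) * rexp (-(s + y) ^ 2 / 2)
        < rexp (-y ^ 2 / 2) * rexp (-(s + x) ^ 2 / 2) := by
      rw [← Real.exp_add, ← Real.exp_add, Real.exp_lt_exp]
      nlinarith [mul_pos (Set.mem_Ioi.mp hs) (sub_pos.mpr hxy)]
    unfold stdNormalPDF
    rw [sub_pos, div_mul_div_comm, div_mul_div_comm]
    gcongr
  have hx := ((integrable_stdNormalPDF.comp_add_right x).const_mul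
    (stdNormalPDF y)).integrableOn (s := Set.Ioi 0)
  have hy := ((integrable_stdNormalPDF.comp_add_right y).const_mul
    (stdNormalPDF x)).integrableOn (s := Set.Ioi 0)
  rw [one_sub_stdNormalCDF, one_sub_stdNormalCDF, ← integral_const_mul, ← integral_const_mul,
    ← sub_pos, ← integral_sub hx hy, setIntegral_pos_iff_support_of_nonneg_ae
      ((ae_restrict_mem measurableSet_Ioi).mono fun s hs => (hlt s hs).le) (hx.sub hy),
    Set.inter_eq_right.mpr fun s hs => Function.mem_support.mpr (hlt s hs).ne']
  simp

/-- The function h is strictly decreasing on (0,1). -/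
theorem hFun_strictAntiOn :
    ∀ a ∈ Set.Ioo (0 : ℝ) 1, ∀ b ∈ Set.Ioo (0 : ℝ) 1, a < b → hFun b < hFun a := by
  intro a ha b hb hab
  obtain ⟨x, hx⟩ := exists_stdNormalCDF_eq (u := 1 - a) ⟨by linarith [ha.2], by linarith [ha.1]⟩
  obtain ⟨y, hy⟩ := exists_stdNormalCDF_eq (u := 1 - b) ⟨by linarith [hb.2], by linarith [hb.1]⟩
  have hyx : y < x := strictMono_stdNormalCDF.lt_iff_lt.mp (by linarith)
  have hlt := stdNormalPDF_mul_one_sub_stdNormalCDF_lt hyx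
  rw [hx, hy, sub_sub_cancel, sub_sub_cancel] at hlt
  unfold hFun
  rw [← hx, ← hy, stdNormalQuantile_stdNormalCDF, stdNormalQuantile_stdNormalCDF,
    ← div_div, ← div_div]
  gcongr ?_ / _
  rwa [div_lt_div_iff₀ hb.1 ha.1]
end

section
/- If (R_n)_{n∈ℕ} is a sequence of real-valued random variables such that for some p ∈ [1,∞) and n₀ ∈ ℕ the random variables Y_n := |n^{(1+p)/(2p)}·R_n|^p with n ≥ n₀ are uniformly integrable, then for every ε > 0 one has sup_{t≥1} t·P( |R_n| > tε/√n ) = o(1/√n) as n → ∞. -/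
open MeasureTheory

/-- A truncated form of Markov's inequality. -/
lemma mul_measureReal_gt_le_setIntegral {Ω : Type*} [MeasurableSpace Ω] {P : Measure Ω}
    [IsFiniteMeasure P] {f : Ω → ℝ} (hf : Measurable f) (hint : Integrable f P) (y : ℝ) :
    y * P.real {ω | f ω > y} ≤ ∫ ω in {ω | f ω > y}, f ω ∂P :=
  setIntegral_ge_of_const_le_real (measurableSet_lt measurable_const hf)
    (measure_ne_top _ _) (fun _ hω => le_of_lt hω) hint.integrableOn

/-- The scaling `x ^ ((1 + p) / (2 * p))` turns the threshold `s / √x` for `|r|` into the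
threshold `√x * s ^ p` for the `p`-th power. -/
lemma sqrt_mul_rpow_lt_abs_scaled_rpow {x p s r : ℝ} (hx : 0 < x) (hp : 0 < p) (hs : 0 ≤ s)
    (hr : s / √x < |r|) : √x * s ^ p < |x ^ ((1 + p) / (2 * p)) * r| ^ p := by
  have hx' : 0 < √x := Real.sqrt_pos.2 hx
  have hscale : (x ^ ((1 + p) / (2 * p))) ^ p = √x * √x ^ p := by
    rw [Real.sqrt_eq_rpow, ← Real.rpow_mul hx.le, ← Real.rpow_mul hx.le, ← Real.rpow_add hx]
    congr 1
    field_simp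
  have hlt : s < √x * |r| := by rwa [div_lt_iff₀' hx'] at hr
  rw [abs_mul, abs_of_pos (Real.rpow_pos_of_pos hx _),
    Real.mul_rpow (Real.rpow_nonneg hx.le _) (abs_nonneg r), hscale, mul_assoc,
    ← Real.mul_rpow hx'.le (abs_nonneg r)]
  exact mul_lt_mul_of_pos_left (Real.rpow_lt_rpow hs hlt hp) hx'

/-- Lemma on remainders: if the variables Y_n := |n^{(1+p)/(2p)} R_n|^p, n ≥ n₀, are
uniformly integrable (in the sense lim_{y→∞} sup_{n ≥ n₀} E(Y_n · 1{Y_n > y}) = 0),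
then for every ε > 0 one has sup_{t ≥ 1} t·P(|R_n| > tε/√n) = o(1/√n). -/
theorem remainder_condition_of_unifIntegrable
    {Ω : Type*} [MeasurableSpace Ω] (P : Measure Ω) [IsProbabilityMeasure P]
    (R : ℕ → Ω → ℝ) (hRmeas : ∀ n, Measurable (R n))
    (p : ℝ) (hp : 1 ≤ p) (n₀ : ℕ)
    (Y : ℕ → Ω → ℝ)
    (hY : ∀ n ω, Y n ω = |(n : ℝ) ^ ((1 + p) / (2 * p)) * R n ω| ^ p)
    (hYint : ∀ n ≥ n₀, Integrable (Y n) P)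
    (hUI : ∀ η > (0 : ℝ), ∃ y₀ : ℝ, ∀ y ≥ y₀, ∀ n ≥ n₀,
      ∫ ω in {ω | Y n ω > y}, Y n ω ∂P ≤ η) :
    ∀ ε > (0 : ℝ), ∀ η > (0 : ℝ), ∃ N : ℕ, ∀ n ≥ N, ∀ t : ℝ, 1 ≤ t →
      t * (P {ω | |R n ω| > t * ε / Real.sqrt n}).toReal ≤ η / Real.sqrt n := by
  intro ε hε η hη
  have hεp : 0 < ε ^ p := Real.rpow_pos_of_pos hε p
  obtain ⟨y₀, hy₀⟩ := hUI (η * ε ^ p) (mul_pos hη hεp)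
  have hlim : Filter.Tendsto (fun n : ℕ => √(n : ℝ) * ε ^ p) Filter.atTop Filter.atTop :=
    (Real.tendsto_sqrt_atTop.comp tendsto_natCast_atTop_atTop).atTop_mul_const hεp
  obtain ⟨N, hN⟩ := Filter.eventually_atTop.1 (hlim.eventually_ge_atTop y₀)
  refine ⟨max (max N n₀) 1, fun n hn t ht => ?_⟩
  simp only [ge_iff_le, max_le_iff] at hn
  obtain ⟨⟨hnN, hn₀⟩, hn1⟩ := hn
  have hn : (0 : ℝ) < n := by exact_mod_cast hn1
  have hsqrt : 0 < √(n : ℝ) := Real.sqrt_pos.2 hn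
  have ht0 : 0 < t := by linarith
  have htp : t ≤ t ^ p := Real.self_le_rpow_of_one_le ht hp
  set y : ℝ := √(n : ℝ) * (t * ε) ^ p with hy
  have hsplit : y = √(n : ℝ) * ε ^ p * t ^ p := by
    rw [hy, Real.mul_rpow ht0.le hε.le]
    ring
  have hyge : y₀ ≤ y := by
    rw [hsplit]
    exact (hN n hnN).trans (le_mul_of_one_le_right (by positivity) (ht.trans htp))
  have hYmeas : Measurable (Y n) := by
    rw [funext (hY n)]
    have := hRmeas n
    fun_prop
  have hsub : {ω | |R n ω| > t * ε / √(n : ℝ)} ⊆ {ω | Y n ω > y} := fun ω hω => by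
    simp only [Set.mem_ofPred_eq, hY]
    exact sqrt_mul_rpow_lt_abs_scaled_rpow hn (by linarith) (by positivity) hω
  have hmono : P.real {ω | |R n ω| > t * ε / √(n : ℝ)} ≤ P.real {ω | Y n ω > y} :=
    measureReal_mono hsub
  have htail : y * P.real {ω | Y n ω > y} ≤ η * ε ^ p :=
    (mul_measureReal_gt_le_setIntegral hYmeas (hYint n hn₀) y).trans (hy₀ y hyge n hn₀)
  change t * P.real _ ≤ _
  rw [le_div_iff₀ hsqrt]
  refine le_of_mul_le_mul_right ?_ hεp
  calc t * P.real {ω | |R n ω| > t * ε / √(n : ℝ)} * √(n : ℝ) * ε ^ p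
      ≤ t ^ p * P.real {ω | Y n ω > y} * √(n : ℝ) * ε ^ p := by gcongr
    _ = y * P.real {ω | Y n ω > y} := by
      rw [hsplit]
      ring
    _ ≤ η * ε ^ p := htail
end
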